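/- (Ehrenfeucht) Let S be a Scott set and M a countable non-standard model of PA with SSy(M) ⊆ S. Then for every X ∈ S there exists a countable elementary extension N of M such that X ∈ SSy(N) ⊆ S. -/

import Mathlib

open FirstOrder FirstOrder.Language

/-- Function symbols of the language of arithmetic: `0`, `1`, `+`, `·`. -/
inductive arithFunc : ℕ → Type
  | zero : arithFunc 0
  | one : arithFunc 0
  | add : arithFunc 2
  | mul : arithFunc 2
  deriving DecidableEq

/-- Relation symbols of the language of arithmetic: `<`. -/
inductive arithRel : ℕ → Type
  | lt : arithRel 2
  deriving DecidableEq

/-- The first-order language of arithmetic `{0, 1, +, ·, <}`. -/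
def arith : FirstOrder.Language := ⟨arithFunc, arithRel⟩

namespace Arith

variable {M : Type*} [arith.Structure M]

/-- The interpretation of `0`. -/
def zeroM (M : Type*) [arith.Structure M] : M :=
  Structure.funMap (L := arith) arithFunc.zero ![]

/-- The interpretation of `1`. -/
def oneM (M : Type*) [arith.Structure M] : M :=
  Structure.funMap (L := arith) arithFunc.one ![]

/-- The interpretation of `+`. -/
def addM (x y : M) : M := Structure.funMap (L := arith) arithFunc.add ![x, y]

/-- The interpretation of `·`. -/
def mulM (x y : M) : M := Structure.funMap (L := arith) arithFunc.mul ![x, y]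

/-- The interpretation of `<`. -/
def ltM (x y : M) : Prop := Structure.RelMap (L := arith) arithRel.lt ![x, y]

/-- Non-strict order. -/
def leM (x y : M) : Prop := ltM x y ∨ x = y

/-- The numeral `n` in `M`: `0`, or `1 + 1 + ⋯ + 1`. -/
def numeral (M : Type*) [arith.Structure M] : ℕ → M
  | 0 => zeroM M
  | n + 1 => addM (numeral M n) (oneM M)

/-- The standard `arith`-structure on `ℕ`. -/
instance : arith.Structure ℕ where
  funMap {n} f v :=
    match f with
    | .zero => 0
    | .one => 1
    | .add => v 0 + v 1
    | .mul => v 0 * v 1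
  RelMap {n} r v :=
    match r with
    | .lt => v 0 < v 1

/-- `M` is a model of Peano arithmetic: it satisfies the finitely many basic axioms of
`PA` together with induction for all parametrically definable sets (which is equivalent
to the usual first-order induction scheme). -/
def IsPAModel (M : Type*) [arith.Structure M] : Prop :=
  (∀ x : M, addM x (zeroM M) = x) ∧
  (∀ x y : M, addM x (addM y (oneM M)) = addM (addM x y) (oneM M)) ∧
  (∀ x : M, mulM x (zeroM M) = zeroM M) ∧
  (∀ x y : M, mulM x (addM y (oneM M)) = addM (mulM x y) x) ∧
  (∀ x : M, ¬ ltM x (zeroM M)) ∧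
  (∀ x y : M, ltM x (addM y (oneM M)) ↔ (ltM x y ∨ x = y)) ∧
  (∀ x : M, addM x (oneM M) ≠ zeroM M) ∧
  (∀ x y : M, addM x (oneM M) = addM y (oneM M) → x = y) ∧
  (∀ s : Set M, Set.Definable₁ (Set.univ : Set M) arith s →
    zeroM M ∈ s → (∀ x ∈ s, addM x (oneM M) ∈ s) → ∀ x : M, x ∈ s)

/-- An element of `M` is standard if it is a numeral. -/
def IsStd (x : M) : Prop := ∃ n : ℕ, x = numeral M n

/-- `M` is a non-standard model of `PA`: a model of `PA` not isomorphic to the standard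
model `ℕ`. -/
def NonstandardModel (M : Type*) [arith.Structure M] : Prop :=
  IsPAModel M ∧ ¬ Nonempty (M ≃[arith] ℕ)

/-- `(x)_i = 1`: the `i`-th binary digit of `x` is `1`, for standard `i`.  This is expressed
by saying that `x = u·2^(i+1) + (2^i + v)` with `v < 2^i`, where `2^i`, `2^(i+1)` are
numerals. -/
def digitB (x : M) (i : ℕ) : Prop :=
  ∃ u v : M, x = addM (mulM u (numeral M (2 ^ (i + 1)))) (addM (numeral M (2 ^ i)) v) ∧
    ltM v (numeral M (2 ^ i))

/-- The standard system of `M`: the collection of subsets of `ℕ` coded by some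
non-standard element of `M` (via its standard binary digits). -/
def SSy (M : Type*) [arith.Structure M] : Set (Set ℕ) :=
  {X | ∃ a : M, ¬ IsStd a ∧ ∀ i : ℕ, i ∈ X ↔ digitB a i}

/-- A function `M → M` is definable (with parameters) if its graph is a definable set. -/
def DefinableFun₁ (f : M → M) : Prop :=
  Set.Definable (Set.univ : Set M) arith {v : Fin 2 → M | f (v 0) = v 1}

/-- A `k`-ary function `M^k → M` is definable (with parameters) if its graph is a
definable set. -/
def DefinableFun {k : ℕ} (F : (Fin k → M) → M) : Prop :=
  Set.Definable (Set.univ : Set M) arith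
    {v : Fin (k + 1) → M | F (fun i => v i.castSucc) = v (Fin.last k)}

/-- `c` is the internal cardinality of the set `D ⊆ M`: there is an `M`-definable
bijection between `{x : x < c}` and `D`. -/
def InternalCard (D : Set M) (c : M) : Prop :=
  ∃ f : M → M, DefinableFun₁ f ∧ Set.BijOn f {x : M | ltM x c} D

/-- `y = 2^x` in the model `M`, expressed via the existence of a definable function
satisfying the recursion of the base-`2` exponential up to `x`. -/
def IsPow2 (x y : M) : Prop :=
  ∃ f : M → M, DefinableFun₁ f ∧ f (zeroM M) = oneM M ∧
    (∀ z : M, ltM z x → f (addM z (oneM M)) = addM (f z) (f z)) ∧ f x = y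

end Arith

namespace Arith

/-- Relativized partial recursiveness: `RecursiveIn O f` means the partial function `f`
is partial recursive in the total oracle `O`.  This mirrors `Nat.Partrec`, with an extra
constructor for the oracle. -/
inductive RecursiveIn (O : ℕ → ℕ) : (ℕ →. ℕ) → Prop
  | zero : RecursiveIn O (pure 0)
  | succ : RecursiveIn O Nat.succ
  | left : RecursiveIn O ↑fun n : ℕ => n.unpair.1
  | right : RecursiveIn O ↑fun n : ℕ => n.unpair.2
  | oracle : RecursiveIn O O
  | pair {f g} : RecursiveIn O f → RecursiveIn O g →
      RecursiveIn O fun n => Nat.pair <$> f n <*> g n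
  | comp {f g} : RecursiveIn O f → RecursiveIn O g → RecursiveIn O fun n => g n >>= f
  | prec {f g} : RecursiveIn O f → RecursiveIn O g → RecursiveIn O (Nat.unpaired fun a n =>
      n.rec (f a) fun y IH => do let i ← IH; g (Nat.pair a (Nat.pair y i)))
  | rfind {f} : RecursiveIn O f →
      RecursiveIn O fun a => Nat.rfind fun n => (fun m => m = 0) <$> f (Nat.pair a n)

open Classical in
/-- The characteristic function of a set of natural numbers. -/
noncomputable def charFn (X : Set ℕ) : ℕ → ℕ := fun n => if n ∈ X then 1 else 0

/-- Turing reducibility between sets of natural numbers. -/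
def TuringLE (Y X : Set ℕ) : Prop := RecursiveIn (charFn X) (charFn Y)

/-- The Turing join `X ⊕ Y = 2X ∪ (2Y + 1)`. -/
def turingJoin (X Y : Set ℕ) : Set ℕ :=
  {n | ∃ m ∈ X, n = 2 * m} ∪ {n | ∃ m ∈ Y, n = 2 * m + 1}

/-- A Turing ideal: a collection of subsets of `ℕ` closed under Turing join and Turing
reducibility. -/
def TuringIdeal (S : Set (Set ℕ)) : Prop :=
  (∀ X ∈ S, ∀ Y ∈ S, turingJoin X Y ∈ S) ∧
  (∀ X ∈ S, ∀ Y : Set ℕ, TuringLE Y X → Y ∈ S)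

/-- The Turing ideal generated by a collection of subsets of `ℕ`. -/
def tIdealGen (C : Set (Set ℕ)) : Set (Set ℕ) :=
  ⋂₀ {I | TuringIdeal I ∧ C ⊆ I}

/-- `T ⊆ ℕ` codes a binary tree: the set of finite binary sequences whose codes lie in
`T` is closed under initial segments. -/
def IsBinTreeSet (T : Set ℕ) : Prop :=
  ∀ s : List Bool, Encodable.encode s ∈ T → ∀ t : List Bool, t <+: s → Encodable.encode t ∈ T

/-- The tree coded by `T` is infinite. -/
def TreeInf (T : Set ℕ) : Prop := {s : List Bool | Encodable.encode s ∈ T}.Infinite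

/-- `P ⊆ ℕ`, viewed as an infinite branch via its characteristic function, is a path
through the tree coded by `T`. -/
def PathThrough (P T : Set ℕ) : Prop :=
  ∀ f : ℕ → Bool, (∀ i : ℕ, f i = true ↔ i ∈ P) →
    ∀ m : ℕ, Encodable.encode (List.ofFn fun i : Fin m => f i) ∈ T

/-- A Scott set: a nonempty Turing ideal such that every infinite binary tree in it has
an infinite path in it. -/
def ScottSet (S : Set (Set ℕ)) : Prop :=
  S.Nonempty ∧ TuringIdeal S ∧
  ∀ T ∈ S, IsBinTreeSet T → TreeInf T → ∃ P ∈ S, PathThrough P T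

open Classical in
/-- The characteristic function of a set, with values in `Bool`. -/
noncomputable def chi (X : Set ℕ) : ℕ → Bool := fun n => if n ∈ X then true else false

/-- The iterated Turing join `⊕_{i<k} X i`. -/
def joinMany : {k : ℕ} → (Fin k → Set ℕ) → Set ℕ
  | 0, _ => ∅
  | (k + 1), X => turingJoin (joinMany fun i => X i.castSucc) (X (Fin.last k))

end Arith

/-!
Adjoin to `M` an element `a` with digits `X`, generic over `M`. Its type is determined by an
ultrafilter `u` on `M`, and the extension is the ultrapower of `M` by `u` restricted to definable
functions, which satisfies the theorem of Łoś because least witnesses are definable. Every element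
of it is the class of some definable `f`, and codes the set of those `i` for which the `i`-th digit
of `f x` is `1` for `u`-almost all `x`; these sets must be kept inside `S`.

There are countably many definable functions, so `u` is built by treating them one at a time. A
stage is a definable binary relation `G` and a set `Y ∈ S` such that, for each `k`, some `x` above a
fixed nonstandard `d` satisfies `G x i ↔ i ∈ Y` for all `i < k`. To treat a new function, join to
`G` the relation "the `i`-th digit of `f x` is `1`". The finite sequences which the joined relation
traces out above `d` form a tree; it is definable in `M`, hence lies in `SSy M ⊆ S`, and its subtree
of sequences agreeing with `Y` at even places is infinite. A path through that subtree in `S` gives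
the next stage.
-/

section Definability

variable {L : Language} {M : Type*} [L.Structure M] {n : ℕ}

/-- Definability of a predicate on tuples, with arbitrary parameters. The predicate form, with
the language explicit, lets the closure lemmas below be applied syntactically. -/
def DefPred (L : Language) {M : Type*} [L.Structure M] {n : ℕ} (P : (Fin n → M) → Prop) : Prop :=
  Set.Definable (Set.univ : Set M) L {v | P v}

/-- Definability of a function on tuples, with arbitrary parameters. -/
def DefFun (L : Language) {M : Type*} [L.Structure M] {n : ℕ} (t : (Fin n → M) → M) : Prop :=
  Set.DefinableFun L (Set.univ : Set M) t

/-- Definability of a unary relation, with arbitrary parameters. -/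
abbrev DefPred₁ (L : Language) {M : Type*} [L.Structure M] (P : M → Prop) : Prop :=
  DefPred L fun v : Fin 1 → M => P (v 0)

/-- Definability of a binary relation, with arbitrary parameters. -/
abbrev DefPred₂ (L : Language) {M : Type*} [L.Structure M] (R : M → M → Prop) : Prop :=
  DefPred L fun v : Fin 2 → M => R (v 0) (v 1)

/-- Definability of a unary function, with arbitrary parameters. -/
abbrev DefFun₁ (L : Language) {M : Type*} [L.Structure M] (f : M → M) : Prop :=
  DefFun L fun v : Fin 1 → M => f (v 0)

namespace DefFun

theorem var (i : Fin n) : DefFun L (fun v : Fin n → M => v i) :=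
  Set.DefinableFun.proj L

theorem const (a : M) : DefFun L (fun _ : Fin n → M => a) :=
  definableFun_const L (Fin n) (Set.mem_univ a)

theorem comp {m : ℕ} {f : (Fin m → M) → M} {g : (Fin n → M) → Fin m → M} (hf : DefFun L f)
    (hg : ∀ i, DefFun L fun v => g v i) : DefFun L fun v => f (g v) :=
  Set.DefinableFun.comp (g := g) hg hf

theorem funMap {m : ℕ} (F : L.Functions m) {g : (Fin n → M) → Fin m → M}
    (hg : ∀ i, DefFun L fun v => g v i) : DefFun L fun v => Structure.funMap F (g v) :=
  comp (Set.DefinableFun.of_empty (Set.DefinableFun.fun_symbol F)) hg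

theorem comp₁ {f : M → M} (hf : DefFun₁ L f) {t : (Fin n → M) → M} (ht : DefFun L t) :
    DefFun L fun v => f (t v) :=
  comp (f := fun v : Fin 1 → M => f (v 0)) (g := fun v => ![t v]) hf
    (by simpa [Fin.forall_fin_succ] using ht)

theorem of_graph {f : M → M} (hf : DefPred₂ L fun x y => f x = y) : DefFun₁ L f :=
  Set.Definable.preimage_comp ![some 0, none] hf

end DefFun

namespace DefPred

theorem preimage {m : ℕ} {P : (Fin m → M) → Prop} {g : (Fin n → M) → Fin m → M}
    (hP : DefPred L P) (hg : ∀ i, DefFun L fun v => g v i) : DefPred L fun v => P (g v) :=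
  Set.Definable.preimage_map (F := g) hg hP

theorem comp₁ {P : M → Prop} (hP : DefPred₁ L P) {t : (Fin n → M) → M} (ht : DefFun L t) :
    DefPred L fun v => P (t v) :=
  preimage (P := fun v : Fin 1 → M => P (v 0)) (g := fun v => ![t v]) hP
    (by simpa [Fin.forall_fin_succ] using ht)

theorem comp₂ {R : M → M → Prop} (hR : DefPred₂ L R) {t u : (Fin n → M) → M}
    (ht : DefFun L t) (hu : DefFun L u) : DefPred L fun v => R (t v) (u v) :=
  preimage (P := fun v : Fin 2 → M => R (v 0) (v 1)) (g := fun v => ![t v, u v]) hR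
    (by simpa [Fin.forall_fin_succ] using ⟨ht, hu⟩)

theorem eq {t u : (Fin n → M) → M} (ht : DefFun L t) (hu : DefFun L u) :
    DefPred L fun v => t v = u v :=
  Set.DefinableFun.ofPred_eq ht hu

theorem rel {m : ℕ} (R : L.Relations m) {g : (Fin n → M) → Fin m → M}
    (hg : ∀ i, DefFun L fun v => g v i) : DefPred L fun v => Structure.RelMap R (g v) := by
  refine preimage (P := Structure.RelMap R) (Set.Definable.mono (Set.empty_definable_iff.2
    ⟨R.formula Term.var, ?_⟩) (Set.empty_subset _)) hg
  ext v
  simp only [Set.mem_ofPred_eq, Formula.realize_rel, Term.realize_var]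

theorem realize (φ : L.BoundedFormula Empty n) :
    DefPred L fun v : Fin n → M => φ.Realize default v := by
  refine Set.Definable.mono (Set.empty_definable_iff.2
    ⟨φ.toFormula.relabel (Sum.elim Empty.elim id), ?_⟩) (Set.empty_subset _)
  ext v
  rw [Set.mem_ofPred_eq, Set.mem_ofPred_eq, Formula.realize_relabel,
    BoundedFormula.realize_toFormula]
  exact Iff.of_eq (congrArg₂ _ (Subsingleton.elim _ _) rfl)

section Connectives

variable {P Q : (Fin n → M) → Prop}

theorem and (hP : DefPred L P) (hQ : DefPred L Q) : DefPred L fun v => P v ∧ Q v :=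
  Set.Definable.inter hP hQ

theorem or (hP : DefPred L P) (hQ : DefPred L Q) : DefPred L fun v => P v ∨ Q v :=
  Set.Definable.union hP hQ

theorem not (hP : DefPred L P) : DefPred L fun v => ¬ P v :=
  Set.Definable.compl hP

theorem imp (hP : DefPred L P) (hQ : DefPred L Q) : DefPred L fun v => P v → Q v := by
  simpa only [imp_iff_not_or] using hP.not.or hQ

theorem iff (hP : DefPred L P) (hQ : DefPred L Q) : DefPred L fun v => P v ↔ Q v := by
  simpa only [iff_iff_implies_and_implies] using (hP.imp hQ).and (hQ.imp hP)

end Connectives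

theorem ex {P : (Fin n → M) → M → Prop}
    (h : DefPred L fun v : Fin (n + 1) → M => P (fun i => v i.castSucc) (v (Fin.last n))) :
    DefPred L fun v => ∃ y, P v y := by
  have := Set.Definable.exists_of_finite (Set.Definable.preimage_comp
    (fun i : Fin (n + 1) => (Fin.lastCases (Sum.inr 0) (fun j => Sum.inl j) i : Fin n ⊕ Fin 1)) h)
  unfold DefPred
  convert! this using 1
  ext v
  simp only [Set.mem_ofPred_eq, Set.mem_preimage, Function.comp, Fin.lastCases_castSucc,
    Fin.lastCases_last, Sum.elim_inl, Sum.elim_inr]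
  exact ⟨fun ⟨y, hy⟩ => ⟨fun _ => y, hy⟩, fun ⟨u, hu⟩ => ⟨u 0, hu⟩⟩

theorem all {P : (Fin n → M) → M → Prop}
    (h : DefPred L fun v : Fin (n + 1) → M => P (fun i => v i.castSucc) (v (Fin.last n))) :
    DefPred L fun v => ∀ y, P v y := by
  simpa only [not_exists, not_not] using (ex (P := fun v y => ¬ P v y) h.not).not

end DefPred

theorem countable_setOf_definable {α : Type*} {A : Set M} [Countable L.Symbols] [Countable A]
    [Countable α] : {s : Set (α → M) | A.Definable L s}.Countable := by
  refine (Set.countable_range fun φ : L[[A]].Formula α => Set.ofPred φ.Realize).mono ?_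
  rintro s ⟨φ, rfl⟩
  exact ⟨φ, rfl⟩

theorem countable_setOf_defFun₁ [Countable L.Symbols] [Countable M] :
    {f : M → M | DefFun₁ L f}.Countable := by
  refine Set.MapsTo.countable_of_injOn (f := fun f : M → M =>
    Function.tupleGraph fun v : Fin 1 → M => f (v 0)) (fun f hf => hf) ?_
    countable_setOf_definable
  intro f _ g _ e
  funext x
  have := (Set.ext_iff.1 e fun o => o.elim (f x) fun _ => x).1 (by simp [Function.tupleGraph])
  simpa [Function.tupleGraph, eq_comm] using this

end Definability

section DefinableUltrapower

variable {L : Language} {M : Type*} [L.Structure M]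

/-- Every definable binary relation has a definable Skolem function. One free variable suffices:
the parameters of a formula over the ultrapower below are all functions of one point. -/
def HasDefinableSkolemFunctions (L : Language) (M : Type*) [L.Structure M] : Prop :=
  ∀ R : M → M → Prop, DefPred₂ L R → ∃ f : M → M, DefFun₁ L f ∧ ∀ y w, R y w → R y (f y)

variable [Nonempty M] (u : Ultrafilter M)

/-- The class of a definable function in the ultrapower of `M` by an ultrafilter on `M` itself. -/
def definableGerm (f : {f : M → M // DefFun₁ L f}) : (u : Filter M).Product fun _ => M :=
  (f.1 : (u : Filter M).Product fun _ => M)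

/-- The substructure of the ultrapower of `M` by `u` formed by the classes of the functions
definable in `M`. -/
def definableHull : L.Substructure ((u : Filter M).Product fun _ => M) where
  carrier := Set.range (definableGerm u)
  fun_mem {n} F z hz := by
    choose f hf using hz
    refine ⟨⟨fun y => Structure.funMap F fun i => (f i).1 y,
      DefFun.funMap F (g := fun v i => (f i).1 (v 0)) fun i => (f i).2⟩, ?_⟩
    rw [← funext hf]
    exact (Ultraproduct.funMap_cast F fun i m => (f i).1 m).symm

theorem realize_snoc_definableGerm {n : ℕ} (φ : L.BoundedFormula Empty (n + 1))
    (f : Fin n → {f : M → M // DefFun₁ L f}) (g : M → M) :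
    φ.Realize default (Fin.snoc (fun i => definableGerm u (f i))
        (g : (u : Filter M).Product fun _ => M) : Fin (n + 1) → (u : Filter M).Product fun _ => M) ↔
      ∀ᶠ m in (u : Filter M),
        φ.Realize default (Fin.snoc (fun i => (f i).1 m) (g m) : Fin (n + 1) → M) := by
  let s : Fin (n + 1) → M → M := Fin.snoc (fun i m => (f i).1 m) g
  have hs : (Fin.snoc (fun i => definableGerm u (f i))
      (g : (u : Filter M).Product fun _ => M) : Fin (n + 1) → (u : Filter M).Product fun _ => M) =
      fun i => ((s i : M → M) : (u : Filter M).Product fun _ => M) :=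
    (Fin.comp_snoc (fun h : M → M => (h : (u : Filter M).Product fun _ => M))
      (fun i m => (f i).1 m) g).symm
  have hsm (m : M) : (fun i => s i m) = Fin.snoc (fun i => (f i).1 m) (g m) :=
    Fin.comp_snoc (fun h : M → M => h m) (fun i m => (f i).1 m) g
  have hlos := Ultraproduct.boundedFormula_realize_cast (u := u) φ (fun e : Empty => e.elim) s
  rw [Subsingleton.elim (fun _ : Empty => _) default, ← hs] at hlos
  exact hlos.trans (Filter.eventually_congr (.of_forall fun m => by
    rw [hsm m, Subsingleton.elim (fun _ : Empty => _) default]))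

theorem definableHull_isElementary (hM : HasDefinableSkolemFunctions L M) :
    (definableHull (L := L) u).IsElementary := by
  refine (definableHull u).isElementary_of_exists fun n φ z a ha => ?_
  obtain ⟨g, rfl⟩ := Quotient.exists_rep a
  choose f hf using fun i => (z i).2
  have hz : ((↑) ∘ z : Fin n → _) = fun i => definableGerm u (f i) := funext fun i => (hf i).symm
  rw [hz] at ha ⊢
  obtain ⟨s, hs, hsR⟩ := hM
    (fun y w : M => φ.Realize default (Fin.snoc (fun i => (f i).1 y) w : Fin (n + 1) → M))
    (DefPred.preimage (g := fun v => Fin.snoc (fun i => (f i).1 (v 0)) (v 1)) (DefPred.realize φ)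
      (by
        refine Fin.lastCases ?_ fun i => ?_
        · simpa only [Fin.snoc_last] using DefFun.var 1
        · simpa only [Fin.snoc_castSucc] using DefFun.comp₁ (f i).2 (DefFun.var 0)))
  refine ⟨⟨definableGerm u ⟨s, hs⟩, _, rfl⟩, ?_⟩
  refine (realize_snoc_definableGerm u φ f _).2 ?_
  filter_upwards [(realize_snoc_definableGerm u φ f g).1 ha] with m hm using hsR _ _ hm

variable (hM : HasDefinableSkolemFunctions L M)

/-- The definable ultrapower of `M` by `u`. -/
def definableUltrapower : L.ElementarySubstructure ((u : Filter M).Product fun _ => M) :=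
  ⟨definableHull u, definableHull_isElementary u hM⟩

namespace definableUltrapower

/-- The element of the definable ultrapower represented by a definable function. -/
def mk (f : {f : M → M // DefFun₁ L f}) : definableUltrapower u hM :=
  ⟨definableGerm u f, f, rfl⟩

theorem mk_surjective : Function.Surjective (mk u hM) := by
  rintro ⟨_, f, rfl⟩
  exact ⟨f, rfl⟩

theorem countable [Countable L.Symbols] [Countable M] : Countable (definableUltrapower u hM) := by
  have : Countable {f : M → M // DefFun₁ L f} := countable_setOf_defFun₁.to_subtype
  exact (mk_surjective u hM).countable

theorem realize_mk {α : Type*} (φ : L.Formula α) (f : α → {f : M → M // DefFun₁ L f}) :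
    φ.Realize (fun i => mk u hM (f i)) ↔
      ∀ᶠ m in (u : Filter M), φ.Realize fun i => (f i).1 m := by
  rw [← Ultraproduct.realize_formula_cast φ fun i m => (f i).1 m]
  exact ((definableUltrapower u hM).subtype.map_formula φ fun i => mk u hM (f i)).symm

/-- The embedding of `M` into its definable ultrapower by constant functions. -/
def constEmbedding : M ↪ₑ[L] definableUltrapower u hM where
  toFun a := mk u hM ⟨fun _ => a, DefFun.const a⟩
  map_formula' n φ v := by
    refine (realize_mk u hM φ fun i => ⟨fun _ => v i, DefFun.const (v i)⟩).trans ?_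
    exact Filter.eventually_const (f := (u : Filter M)) (p := φ.Realize v)

end definableUltrapower

end DefinableUltrapower

namespace Arith

section Semiring

-- The `Fact` keeps these instances apart from the usual ones on `ℕ`, itself an `arith`-structure.
instance {M : Type*} [arith.Structure M] [Fact (IsPAModel M)] : Zero M := ⟨zeroM M⟩

instance {M : Type*} [arith.Structure M] [Fact (IsPAModel M)] : One M := ⟨oneM M⟩

instance {M : Type*} [arith.Structure M] [Fact (IsPAModel M)] : Add M := ⟨addM⟩

instance {M : Type*} [arith.Structure M] [Fact (IsPAModel M)] : Mul M := ⟨mulM⟩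

variable {M : Type*} [arith.Structure M] [h : Fact (IsPAModel M)] {n : ℕ}

theorem defFun_add {t u : (Fin n → M) → M} (ht : DefFun arith t) (hu : DefFun arith u) :
    DefFun arith fun v => t v + u v :=
  DefFun.funMap (L := arith) arithFunc.add (g := fun v => ![t v, u v])
    (by simpa [Fin.forall_fin_succ] using ⟨ht, hu⟩)

theorem defFun_mul {t u : (Fin n → M) → M} (ht : DefFun arith t) (hu : DefFun arith u) :
    DefFun arith fun v => t v * u v :=
  DefFun.funMap (L := arith) arithFunc.mul (g := fun v => ![t v, u v])
    (by simpa [Fin.forall_fin_succ] using ⟨ht, hu⟩)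

namespace IsPAModel

theorem induction {P : M → Prop} (hP : DefPred₁ arith P) (zero : P 0)
    (succ : ∀ x, P x → P (x + 1)) (x : M) : P x :=
  h.out.2.2.2.2.2.2.2.2 {x | P x} hP zero succ x

protected theorem add_zero (x : M) : x + 0 = x := h.out.1 x

theorem add_succ (x y : M) : x + (y + 1) = x + y + 1 := h.out.2.1 x y

protected theorem mul_zero (x : M) : x * 0 = 0 := h.out.2.2.1 x

theorem mul_succ (x y : M) : x * (y + 1) = x * y + x := h.out.2.2.2.1 x y

theorem succ_ne_zero (x : M) : x + 1 ≠ 0 := h.out.2.2.2.2.2.2.1 x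

theorem succ_inj {x y : M} (e : x + 1 = y + 1) : x = y := h.out.2.2.2.2.2.2.2.1 x y e

protected theorem zero_add (x : M) : 0 + x = x := by
  refine induction (P := fun x => 0 + x = x) ?_ ?_ (fun y hy => ?_) x
  · apply_rules [DefPred.eq, defFun_add, DefFun.var, DefFun.const]
  · rw [IsPAModel.add_zero]
  · rw [add_succ, hy]

theorem succ_add (x y : M) : x + 1 + y = x + y + 1 := by
  refine induction (P := fun y => x + 1 + y = x + y + 1) ?_ ?_ (fun y hy => ?_) y
  · apply_rules [DefPred.eq, defFun_add, DefFun.var, DefFun.const]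
  · rw [IsPAModel.add_zero, IsPAModel.add_zero]
  · rw [add_succ, hy, add_succ]

protected theorem add_comm (x y : M) : x + y = y + x := by
  refine induction (P := fun y => x + y = y + x) ?_ ?_ (fun y hy => ?_) y
  · apply_rules [DefPred.eq, defFun_add, DefFun.var, DefFun.const]
  · rw [IsPAModel.add_zero, IsPAModel.zero_add]
  · rw [add_succ, hy, succ_add]

protected theorem add_assoc (x y z : M) : x + y + z = x + (y + z) := by
  refine induction (P := fun z => x + y + z = x + (y + z)) ?_ ?_ (fun z hz => ?_) z
  · apply_rules [DefPred.eq, defFun_add, DefFun.var, DefFun.const]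
  · rw [IsPAModel.add_zero, IsPAModel.add_zero]
  · rw [add_succ, hz, add_succ, add_succ]

instance : AddCommMonoid M where
  add_assoc := IsPAModel.add_assoc
  zero_add := IsPAModel.zero_add
  add_zero := IsPAModel.add_zero
  add_comm := IsPAModel.add_comm
  nsmul := nsmulRec

protected theorem zero_mul (x : M) : 0 * x = 0 := by
  refine induction (P := fun x => 0 * x = 0) ?_ ?_ (fun y hy => ?_) x
  · apply_rules [DefPred.eq, defFun_mul, DefFun.var, DefFun.const]
  · rw [IsPAModel.mul_zero]
  · rw [mul_succ, hy, add_zero]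

theorem succ_mul (x y : M) : (x + 1) * y = x * y + y := by
  refine induction (P := fun y => (x + 1) * y = x * y + y) ?_ ?_ (fun y hy => ?_) y
  · apply_rules [DefPred.eq, defFun_add, defFun_mul, DefFun.var, DefFun.const]
  · rw [IsPAModel.mul_zero, IsPAModel.mul_zero, add_zero]
  · rw [mul_succ, hy, mul_succ, add_assoc, add_assoc, ← add_assoc y, ← add_assoc x, add_comm y]

protected theorem mul_comm (x y : M) : x * y = y * x := by
  refine induction (P := fun y => x * y = y * x) ?_ ?_ (fun y hy => ?_) y
  · apply_rules [DefPred.eq, defFun_mul, DefFun.var, DefFun.const]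
  · rw [IsPAModel.mul_zero, IsPAModel.zero_mul]
  · rw [mul_succ, hy, succ_mul]

protected theorem mul_add (x y z : M) : x * (y + z) = x * y + x * z := by
  refine induction (P := fun z => x * (y + z) = x * y + x * z) ?_ ?_ (fun z hz => ?_) z
  · apply_rules [DefPred.eq, defFun_add, defFun_mul, DefFun.var, DefFun.const]
  · rw [add_zero, IsPAModel.mul_zero, add_zero]
  · rw [add_succ, mul_succ, hz, mul_succ, add_assoc]

protected theorem mul_assoc (x y z : M) : x * y * z = x * (y * z) := by
  refine induction (P := fun z => x * y * z = x * (y * z)) ?_ ?_ (fun z hz => ?_) z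
  · apply_rules [DefPred.eq, defFun_mul, DefFun.var, DefFun.const]
  · rw [IsPAModel.mul_zero, IsPAModel.mul_zero, IsPAModel.mul_zero]
  · rw [mul_succ, hz, mul_succ, IsPAModel.mul_add]

protected theorem mul_one (x : M) : x * 1 = x := by
  rw [← zero_add (1 : M), mul_succ, IsPAModel.mul_zero, zero_add]

instance : CommSemiring M where
  mul_assoc := IsPAModel.mul_assoc
  one_mul x := (IsPAModel.mul_comm _ _).trans (IsPAModel.mul_one x)
  mul_one := IsPAModel.mul_one
  mul_comm := IsPAModel.mul_comm
  left_distrib := IsPAModel.mul_add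
  right_distrib x y z := by
    rw [IsPAModel.mul_comm, IsPAModel.mul_add, IsPAModel.mul_comm z, IsPAModel.mul_comm z]
  zero_mul := IsPAModel.zero_mul
  mul_zero := IsPAModel.mul_zero

end IsPAModel

end Semiring

section Order

instance {M : Type*} [arith.Structure M] [Fact (IsPAModel M)] : LT M := ⟨ltM⟩

instance {M : Type*} [arith.Structure M] [Fact (IsPAModel M)] : LE M := ⟨leM⟩

variable {M : Type*} [arith.Structure M] [h : Fact (IsPAModel M)] {n : ℕ}

theorem defPred_lt {t u : (Fin n → M) → M} (ht : DefFun arith t) (hu : DefFun arith u) :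
    DefPred arith fun v => t v < u v :=
  DefPred.rel (L := arith) arithRel.lt (g := fun v => ![t v, u v])
    (by simpa [Fin.forall_fin_succ] using ⟨ht, hu⟩)

namespace IsPAModel

protected theorem le_iff_lt_or_eq {x y : M} : x ≤ y ↔ x < y ∨ x = y := Iff.rfl

protected theorem not_lt_zero (x : M) : ¬ x < 0 := h.out.2.2.2.2.1 x

theorem lt_succ_iff (x y : M) : x < y + 1 ↔ x ≤ y := h.out.2.2.2.2.2.1 x y

theorem eq_zero_or_eq_succ (x : M) : x = 0 ∨ ∃ y, x = y + 1 := by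
  refine induction (P := fun x => x = 0 ∨ ∃ y, x = y + 1) ?_ ?_ (fun y _ => ?_) x
  · apply_rules [DefPred.or, DefPred.ex, DefPred.eq, defFun_add, DefFun.var, DefFun.const]
  · exact .inl rfl
  · exact .inr ⟨y, rfl⟩

protected theorem add_right_cancel {x y z : M} (e : x + z = y + z) : x = y := by
  refine induction (P := fun z => x + z = y + z → x = y) ?_ ?_ (fun z hz => ?_) z e
  · apply_rules [DefPred.imp, DefPred.eq, defFun_add, DefFun.var, DefFun.const]
  · rw [add_zero, add_zero]; exact id
  · rw [← add_assoc, ← add_assoc]; exact fun e => hz (succ_inj e)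

theorem le_iff_exists_add_of_lt_iff {y : M} (hy : ∀ x, x < y ↔ ∃ z, x + z + 1 = y) (x : M) :
    x ≤ y ↔ ∃ z, x + z = y := by
  rw [IsPAModel.le_iff_lt_or_eq, hy]
  constructor
  · rintro (⟨z, e⟩ | rfl)
    · exact ⟨z + 1, by rw [← add_assoc, e]⟩
    · exact ⟨0, add_zero x⟩
  · rintro ⟨z, e⟩
    rcases eq_zero_or_eq_succ z with rfl | ⟨w, rfl⟩
    · exact .inr (by rw [← e, add_zero])
    · exact .inl ⟨w, by rw [add_assoc, e]⟩

theorem lt_iff_exists_add (x y : M) : x < y ↔ ∃ z, x + z + 1 = y := by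
  refine induction (P := fun y => ∀ x, x < y ↔ ∃ z, x + z + 1 = y) ?_ (fun x => ?_)
    (fun y hy x => ?_) y x
  · apply_rules [DefPred.all, DefPred.iff, DefPred.ex, DefPred.eq, defPred_lt, defFun_add,
      DefFun.var, DefFun.const]
  · exact ⟨fun e => (IsPAModel.not_lt_zero _ e).elim, fun ⟨z, e⟩ => (succ_ne_zero _ e).elim⟩
  · rw [lt_succ_iff, le_iff_exists_add_of_lt_iff hy]
    exact exists_congr fun z => ⟨fun e => by rw [e], succ_inj⟩

protected theorem le_iff_exists_add (x y : M) : x ≤ y ↔ ∃ z, x + z = y :=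
  le_iff_exists_add_of_lt_iff (fun x => lt_iff_exists_add x y) x

theorem eq_zero_of_add_eq_zero {x y : M} (e : x + y = 0) : y = 0 := by
  rcases eq_zero_or_eq_succ y with rfl | ⟨w, rfl⟩
  · rfl
  · exact (succ_ne_zero (x + w) (by rw [add_assoc, e])).elim

theorem eq_zero_of_add_eq_self {x y : M} (e : x + y = x) : y = 0 :=
  IsPAModel.add_right_cancel (z := x) (by rw [add_comm, e, zero_add])

protected theorem le_antisymm {x y : M} (hxy : x ≤ y) (hyx : y ≤ x) : x = y := by
  obtain ⟨z, rfl⟩ := (IsPAModel.le_iff_exists_add _ _).1 hxy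
  obtain ⟨w, e⟩ := (IsPAModel.le_iff_exists_add _ _).1 hyx
  rw [add_assoc] at e
  have e := eq_zero_of_add_eq_self e
  rw [add_comm] at e
  rw [eq_zero_of_add_eq_zero e, add_zero]

protected theorem le_total (x y : M) : x ≤ y ∨ y ≤ x := by
  refine induction (P := fun y => x ≤ y ∨ y ≤ x) ?_ ?_ (fun y hy => ?_) y
  · simp only [IsPAModel.le_iff_lt_or_eq]
    apply_rules [DefPred.or, DefPred.eq, defPred_lt, DefFun.var, DefFun.const]
  · exact .inr ((IsPAModel.le_iff_exists_add _ _).2 ⟨x, zero_add x⟩)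
  · rcases hy with hy | hy
    · exact .inl (.inl ((lt_succ_iff _ _).2 hy))
    · obtain ⟨z, rfl⟩ := (IsPAModel.le_iff_exists_add _ _).1 hy
      rcases eq_zero_or_eq_succ z with rfl | ⟨w, rfl⟩
      · exact .inl (.inl ((lt_succ_iff _ _).2 (.inr (add_zero y))))
      · exact .inr ((IsPAModel.le_iff_exists_add _ _).2 ⟨w, by ring⟩)

noncomputable instance : LinearOrder M where
  le_refl x := .inr rfl
  le_trans x y z hxy hyz := by
    rw [IsPAModel.le_iff_exists_add] at hxy hyz ⊢
    obtain ⟨u, rfl⟩ := hxy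
    obtain ⟨v, rfl⟩ := hyz
    exact ⟨u + v, (add_assoc _ _ _).symm⟩
  lt_iff_le_not_ge _ _ := by
    refine ⟨fun hxy => ⟨.inl hxy, fun hyx => ?_⟩, ?_⟩
    · obtain rfl := IsPAModel.le_antisymm (.inl hxy) hyx
      obtain ⟨z, e⟩ := (lt_iff_exists_add _ _).1 hxy
      exact succ_ne_zero z (eq_zero_of_add_eq_self (by rw [← add_assoc, e]))
    · rintro ⟨hxy | rfl, hyx⟩
      · exact hxy
      · exact (hyx (.inr rfl)).elim
  le_antisymm _ _ := IsPAModel.le_antisymm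
  le_total := IsPAModel.le_total
  toDecidableLE := Classical.decRel _

instance : CanonicallyOrderedAdd M where
  exists_add_of_le {x y} hxy := ((IsPAModel.le_iff_exists_add x y).1 hxy).imp fun _ => Eq.symm
  le_add_self _ y := (IsPAModel.le_iff_exists_add _ _).2 ⟨y, add_comm _ _⟩
  le_self_add _ y := (IsPAModel.le_iff_exists_add _ _).2 ⟨y, rfl⟩

noncomputable instance : SuccAddOrder M where
  toSuccOrder := SuccOrder.ofSuccLeIff (· + 1) fun {x y} => by
    rw [lt_iff_exists_add, IsPAModel.le_iff_exists_add]
    simp only [add_right_comm x 1]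
  succ_eq_add_one _ := rfl

instance : IsOrderedCancelAddMonoid M where
  add_le_add_left x y hxy z := by
    obtain ⟨w, rfl⟩ := exists_add_of_le hxy
    rw [add_right_comm]
    exact le_self_add
  le_of_add_le_add_left x y z e := by
    obtain ⟨w, e⟩ := exists_add_of_le e
    have : z = y + w := IsPAModel.add_right_cancel (z := x) (by rw [add_comm z, e]; ring)
    rw [this]; exact le_self_add

instance : NoMaxOrder M := ⟨fun x => ⟨x + 1, (lt_succ_iff x x).2 le_rfl⟩⟩

protected theorem mul_lt_mul_of_pos_left {x y z : M} (hx : 0 < x) (hyz : y < z) :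
    x * y < x * z := by
  obtain ⟨v, rfl⟩ := exists_add_of_le (Order.add_one_le_of_lt hyz)
  obtain ⟨u, rfl⟩ := exists_add_of_le (Order.add_one_le_of_lt hx)
  rw [← Order.add_one_le_iff]
  refine le_of_le_of_eq (le_self_add (b := u + (0 + 1 + u) * v)) ?_
  ring

instance : IsStrictOrderedRing M where
  zero_le_one := zero_le
  exists_pair_ne := ⟨0 + 1, 0, succ_ne_zero _⟩
  mul_lt_mul_of_pos_left _ hx _ _ := IsPAModel.mul_lt_mul_of_pos_left hx
  mul_lt_mul_of_pos_right x hx y z hyz := by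
    simpa only [mul_comm _ x] using IsPAModel.mul_lt_mul_of_pos_left hx hyz

end IsPAModel

theorem exists_least {P : M → Prop} (hP : DefPred₁ arith P) (hne : ∃ y, P y) :
    ∃ y, P y ∧ ∀ z, z < y → ¬ P z := by
  by_contra! hlt
  have hbelow : ∀ y z : M, z < y → ¬ P z := by
    refine IsPAModel.induction ?_ (fun z hz => (not_lt_zero hz).elim) fun y hy z hz => ?_
    · apply_rules [DefPred.all, DefPred.not, DefPred.imp, DefPred.comp₁ hP, defPred_lt, DefFun.var]
    · rcases (Order.lt_add_one_iff.1 hz).lt_or_eq with hz | rfl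
      · exact hy z hz
      · exact fun hPz => (hlt z hPz).elim fun w hw => hy w hw.1 hw.2
  obtain ⟨y, hy⟩ := hne
  exact hbelow (y + 1) y (Order.lt_add_one_iff.2 le_rfl) hy

/-- `y` is the least solution of `R x y`, or `0` if there is none. -/
def IsLeastSolution (R : M → M → Prop) (x y : M) : Prop :=
  (R x y ∧ ∀ z, z < y → ¬ R x z) ∨ ((∀ z, ¬ R x z) ∧ y = 0)

theorem existsUnique_isLeastSolution {R : M → M → Prop} (hR : DefPred₂ arith R) (x : M) :
    ∃! y, IsLeastSolution R x y := by
  by_cases hx : ∃ y, R x y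
  · obtain ⟨y, hy, hmin⟩ := exists_least (P := R x)
      (DefPred.comp₂ hR (DefFun.const x) (DefFun.var 0)) hx
    refine ⟨y, .inl ⟨hy, hmin⟩, ?_⟩
    rintro z (⟨hz, hzmin⟩ | ⟨hz, -⟩)
    · exact le_antisymm (not_lt.1 fun hlt => hzmin _ hlt hy) (not_lt.1 fun hlt => hmin _ hlt hz)
    · exact (hz y hy).elim
  · push Not at hx
    refine ⟨0, .inr ⟨hx, rfl⟩, ?_⟩
    rintro z (⟨hz, -⟩ | ⟨-, rfl⟩)
    · exact (hx z hz).elim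
    · rfl

theorem hasDefinableSkolemFunctions : HasDefinableSkolemFunctions arith M := by
  intro R hR
  choose f hf huniq using fun x => existsUnique_isLeastSolution hR x
  have hgraph : (fun x y => f x = y) = IsLeastSolution R := by
    funext x y
    exact propext ⟨fun e => e ▸ hf x, fun hy => (huniq x y hy).symm⟩
  refine ⟨f, DefFun.of_graph ?_, fun x y hxy => ?_⟩
  · rw [hgraph]
    unfold IsLeastSolution
    apply_rules [DefPred.or, DefPred.and, DefPred.all, DefPred.not, DefPred.imp, DefPred.eq,
      DefPred.comp₂ hR, defPred_lt, DefFun.var, DefFun.const]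
  · rcases hf x with ⟨hx, -⟩ | ⟨hx, -⟩
    · exact hx
    · exact (hx y hxy).elim

end Order

end Arith

theorem eq_of_mul_add_eq_mul_add {R : Type*} [Semiring R] [LinearOrder R] [IsStrictOrderedRing R]
    [CanonicallyOrderedAdd R] [SuccAddOrder R] {m u v r s : R} (hr : r < m)
    (hs : s < m) (e : u * m + r = v * m + s) : r = s := by
  have not_lt_quotient {u v r s : R} (hr : r < m) (e : u * m + r = v * m + s) : ¬ u < v := by
    intro huv
    refine lt_irrefl (u * m + r) ?_
    calc u * m + r < u * m + m := by gcongr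
      _ = (u + 1) * m := by rw [add_mul, one_mul]
      _ ≤ v * m := mul_le_mul_of_nonneg_right (Order.add_one_le_of_lt huv) zero_le
      _ ≤ v * m + s := le_self_add
      _ = u * m + r := e.symm
  obtain rfl : u = v :=
    le_antisymm (not_lt.1 (not_lt_quotient hs e.symm)) (not_lt.1 (not_lt_quotient hr e))
  exact add_left_cancel e

theorem testBit_iff_two_pow_le_mod (N i : ℕ) : N.testBit i = true ↔ 2 ^ i ≤ N % 2 ^ (i + 1) := by
  have hmod : (N % 2 ^ (i + 1)).testBit i = N.testBit i := by simp [Nat.testBit_mod_two_pow]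
  rw [← hmod]
  exact ⟨Nat.ge_two_pow_of_testBit, fun hle =>
    Nat.testBit_of_two_pow_le_and_two_pow_add_one_gt hle (Nat.mod_lt _ (by positivity))⟩

theorem exists_testBit_iff (X : Set ℕ) (k : ℕ) : ∃ N : ℕ, ∀ i < k, N.testBit i = true ↔ i ∈ X := by
  classical
  refine ⟨Nat.ofBits fun i : Fin k => decide ((i : ℕ) ∈ X), fun i hi => ?_⟩
  rw [Nat.testBit_ofBits_lt _ _ hi, decide_eq_true_iff]

namespace Arith

section Standard

variable {M : Type*} [arith.Structure M] [h : Fact (IsPAModel M)]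

theorem numeral_eq_cast (n : ℕ) : numeral M n = n := by
  induction n with
  | zero => exact Nat.cast_zero.symm
  | succ n ih => rw [Nat.cast_succ, ← ih]; rfl

theorem isStd_iff {x : M} : IsStd x ↔ ∃ n : ℕ, x = n := by
  simp only [IsStd, numeral_eq_cast]

theorem isStd_cast (n : ℕ) : IsStd (n : M) := isStd_iff.2 ⟨n, rfl⟩

theorem exists_eq_cast_of_lt_cast {x : M} {n : ℕ} (hx : x < n) : ∃ m < n, x = m := by
  induction n with
  | zero => simp at hx
  | succ n ih =>
    rw [Nat.cast_succ, Order.lt_add_one_iff] at hx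
    rcases hx.lt_or_eq with hx | rfl
    · obtain ⟨m, hm, e⟩ := ih hx
      exact ⟨m, hm.trans n.lt_succ_self, e⟩
    · exact ⟨n, n.lt_succ_self, rfl⟩

theorem not_isStd_of_lt {d x : M} (hd : ¬ IsStd d) (hx : d < x) : ¬ IsStd x := by
  intro hstd
  obtain ⟨n, rfl⟩ := isStd_iff.1 hstd
  obtain ⟨m, -, rfl⟩ := exists_eq_cast_of_lt_cast hx
  exact hd (isStd_cast m)

theorem cast_lt_of_not_isStd {d : M} (hd : ¬ IsStd d) (n : ℕ) : (n : M) < d := by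
  refine lt_of_le_of_ne (not_lt.1 fun hlt => ?_) fun e => hd (e ▸ isStd_cast n)
  exact not_isStd_of_lt hd hlt (isStd_cast n)

theorem overspill {d : M} (hd : ¬ IsStd d) {P : M → Prop} (hP : DefPred₁ arith P)
    (hn : ∀ n : ℕ, P n) : ∃ k, ¬ IsStd k ∧ P k := by
  by_contra! hk
  refine hk d hd (IsPAModel.induction hP (Nat.cast_zero (R := M) ▸ hn 0) (fun x hx => ?_) d)
  obtain ⟨n, rfl⟩ := isStd_iff.1 (not_imp_comm.1 (hk x) (not_not.2 hx))
  exact (Nat.cast_succ (R := M) n ▸ hn (n + 1) :)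

end Standard

theorem NonstandardModel.exists_not_isStd {M : Type*} [arith.Structure M]
    (hM : NonstandardModel M) : ∃ d : M, ¬ IsStd d := by
  by_contra! hstd
  have : Fact (IsPAModel M) := ⟨hM.1⟩
  let e : ℕ ≃ M := Equiv.ofBijective Nat.cast ⟨Nat.cast_injective, fun x =>
    (isStd_iff.1 (hstd x)).imp fun _ => Eq.symm⟩
  refine hM.2 ⟨Language.Equiv.symm (L := arith) ⟨e, fun {n} f v => ?_, fun {n} r v => ?_⟩⟩
  · change arithFunc n at f
    cases f
    · exact (Nat.cast_zero (R := M)).trans (congrArg (Structure.funMap (L := arith) (M := M)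
        (show arith.Functions 0 from arithFunc.zero)) (Subsingleton.elim ![] (e ∘ v)))
    · exact (Nat.cast_one (R := M)).trans (congrArg (Structure.funMap (L := arith) (M := M)
        (show arith.Functions 0 from arithFunc.one)) (Subsingleton.elim ![] (e ∘ v)))
    · exact (Nat.cast_add (R := M) (v 0) (v 1)).trans
        (congrArg _ (FinVec.etaExpand_eq (e ∘ v)))
    · exact (Nat.cast_mul (α := M) (v 0) (v 1)).trans
        (congrArg _ (FinVec.etaExpand_eq (e ∘ v)))
  · change arithRel n at r
    cases r
    exact (Iff.of_eq (congrArg _ (FinVec.etaExpand_eq (e ∘ v)).symm)).trans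
      (Nat.cast_lt (α := M) (m := v 0) (n := v 1))

section Coding

variable {M : Type*} [arith.Structure M] [h : Fact (IsPAModel M)] {n : ℕ}

theorem digitB_iff {a : M} {i : ℕ} :
    digitB a i ↔ ∃ u v : M, a = u * 2 ^ (i + 1) + (2 ^ i + v) ∧ v < 2 ^ i := by
  simp only [digitB, numeral_eq_cast, Nat.cast_pow, Nat.cast_ofNat]
  rfl

theorem digitB_mul_two_pow_add_cast (u : M) (N i : ℕ) :
    digitB (u * 2 ^ (i + 1) + N) i ↔ N.testBit i = true := by
  set r := N % 2 ^ (i + 1) with hr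
  have hrlt : r < 2 ^ (i + 1) := Nat.mod_lt _ (by positivity)
  have hsplit : u * 2 ^ (i + 1) + N = (u + (N / 2 ^ (i + 1) : ℕ)) * 2 ^ (i + 1) + r := by
    have hN : ((N / 2 ^ (i + 1) * 2 ^ (i + 1) + r : ℕ) : M) = N := by rw [Nat.div_add_mod']
    rw [← hN]; push_cast; ring
  rw [testBit_iff_two_pow_le_mod, digitB_iff, hsplit]
  constructor
  · rintro ⟨w, v, e, hv⟩
    have hrv : (r : M) = 2 ^ i + v := eq_of_mul_add_eq_mul_add (by exact_mod_cast hrlt)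
      (by rw [pow_succ, mul_two]; gcongr) e
    have hle : ((2 ^ i : ℕ) : M) ≤ r := by rw [hrv]; push_cast; exact le_self_add
    exact_mod_cast hle
  · intro hle
    obtain ⟨v, hv⟩ := Nat.exists_eq_add_of_le hle
    refine ⟨_, v, by rw [hr, hv]; push_cast; rfl, ?_⟩
    have hv : v < 2 ^ i := by rw [pow_succ] at hrlt; omega
    exact_mod_cast hv

theorem digitB_cast (N i : ℕ) : digitB (N : M) i ↔ N.testBit i = true := by
  simpa using digitB_mul_two_pow_add_cast (0 : M) N i

theorem exists_gt_digitB_iff (d : M) (X : Set ℕ) (k : ℕ) :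
    ∃ a, d < a ∧ ∀ i < k, digitB a i ↔ i ∈ X := by
  obtain ⟨N, hN⟩ := exists_testBit_iff X k
  refine ⟨(d + 1) * 2 ^ k + N, ?_, fun i hi => ?_⟩
  · rw [← Order.add_one_le_iff]
    exact (le_mul_of_one_le_right zero_le (one_le_pow₀ one_le_two)).trans le_self_add
  · obtain ⟨j, rfl⟩ := Nat.exists_eq_add_of_lt hi
    rw [← hN i hi, ← digitB_mul_two_pow_add_cast ((d + 1) * 2 ^ j) N i]
    ring_nf

/-- Gödel's `β` function: `r` is the remainder of `c` modulo `(i + 1) * d + 1`. -/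
def IsBeta (c d i r : M) : Prop :=
  ∃ q, c = q * ((i + 1) * d + 1) + r ∧ r < (i + 1) * d + 1

theorem defPred_isBeta {c d i r : (Fin n → M) → M} (hc : DefFun arith c) (hd : DefFun arith d)
    (hi : DefFun arith i) (hr : DefFun arith r) :
    DefPred arith fun v => IsBeta (c v) (d v) (i v) (r v) := by
  have hbeta : DefPred arith fun v : Fin 4 → M => IsBeta (v 0) (v 1) (v 2) (v 3) := by
    unfold IsBeta
    apply_rules [DefPred.ex, DefPred.and, DefPred.eq, defPred_lt, defFun_add, defFun_mul,
      DefFun.var, DefFun.const]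
  exact hbeta.preimage (g := fun v => ![c v, d v, i v, r v])
    (by simpa [Fin.forall_fin_succ] using ⟨hc, hd, hi, hr⟩)

namespace IsBeta

theorem unique {c d i r s : M} (hr : IsBeta c d i r) (hs : IsBeta c d i s) : r = s := by
  obtain ⟨q, e, hq⟩ := hr
  obtain ⟨q', e', hq'⟩ := hs
  exact eq_of_mul_add_eq_mul_add hq hq' (e.symm.trans e')

theorem cast (N i : ℕ) : IsBeta (N.unpair.1 : M) (N.unpair.2 : M) i (Nat.beta N i : M) := by
  refine ⟨(N.unpair.1 / ((i + 1) * N.unpair.2 + 1) : ℕ), ?_, ?_⟩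
  · rw [Nat.beta]
    exact_mod_cast (Nat.div_add_mod' _ _).symm
  · rw [Nat.beta]
    exact_mod_cast Nat.mod_lt _ (Nat.succ_pos _)

theorem exists_pow_of_lt (M : Type*) [arith.Structure M] [Fact (IsPAModel M)] (n : ℕ) :
    ∃ c d : M, ∀ i < n, IsBeta c d (i : ℕ) (2 ^ i) := by
  let l : List ℕ := List.ofFn fun i : Fin n => 2 ^ (i : ℕ)
  refine ⟨(Nat.unbeta l).unpair.1, (Nat.unbeta l).unpair.2, fun i hi => ?_⟩
  have hpow : Nat.beta (Nat.unbeta l) i = 2 ^ i := by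
    simpa only [l, Fin.getElem_fin, List.getElem_ofFn] using
      Nat.beta_unbeta_coe l ⟨i, by simpa [l] using hi⟩
  simpa only [hpow, Nat.cast_pow, Nat.cast_ofNat] using IsBeta.cast (M := M) (Nat.unbeta l) i

-- The doubling rule `r ↦ r + r` is preserved up to a nonstandard place by overspill, so no
-- exponentiation inside `M` is needed.
theorem exists_iff_eq_pow {d : M} (hd : ¬ IsStd d) :
    ∃ b c : M, ∀ (i : ℕ) (r : M), IsBeta b c i r ↔ r = 2 ^ i := by
  obtain ⟨k, hk, b, c, zero, succ⟩ := overspill hd (P := fun k => ∃ b c : M, IsBeta b c 0 1 ∧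
      ∀ i, i < k → ∀ r, IsBeta b c i r → IsBeta b c (i + 1) (r + r))
    (by
      apply_rules [defPred_isBeta, DefPred.ex, DefPred.all, DefPred.and, DefPred.imp, defPred_lt,
        defFun_add, DefFun.var, DefFun.const])
    (by
      intro n
      obtain ⟨b, c, hpow⟩ := exists_pow_of_lt M (n + 1)
      refine ⟨b, c, by simpa using hpow 0 n.succ_pos, fun i hi r hr => ?_⟩
      obtain ⟨m, hm, rfl⟩ := exists_eq_cast_of_lt_cast hi
      rw [hr.unique (hpow m (by omega)), ← mul_two, ← pow_succ]
      exact_mod_cast hpow (m + 1) (by omega))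
  have hpow (i : ℕ) : IsBeta b c i (2 ^ i) := by
    induction i with
    | zero => simpa using zero
    | succ i ih =>
      rw [pow_succ, mul_two, Nat.cast_succ]
      exact succ i (cast_lt_of_not_isStd hk i) _ ih
  exact ⟨b, c, fun i r => ⟨fun hr => hr.unique (hpow i), fun hr => hr ▸ hpow i⟩⟩

end IsBeta

theorem exists_defPred_digit {d : M} (hd : ¬ IsStd d) :
    ∃ B : M → M → Prop, DefPred₂ arith B ∧ ∀ (a : M) (i : ℕ), B a i ↔ digitB a i := by
  obtain ⟨b, c, hbc⟩ := IsBeta.exists_iff_eq_pow hd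
  refine ⟨fun a i => ∃ p, IsBeta b c i p ∧ ∃ u v, a = u * (p + p) + (p + v) ∧ v < p, ?_,
    fun a i => ?_⟩
  · apply_rules [defPred_isBeta, DefPred.ex, DefPred.and, DefPred.eq, defPred_lt, defFun_add,
      defFun_mul, DefFun.var, DefFun.const]
  · simp only [hbc, exists_eq_left, digitB_iff, pow_succ, mul_two]

theorem setOf_cast_mem_SSy {d : M} (hd : ¬ IsStd d) {P : M → Prop} (hP : DefPred₁ arith P) :
    {i : ℕ | P i} ∈ SSy M := by
  obtain ⟨B, hB, hdig⟩ := exists_defPred_digit hd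
  obtain ⟨k, hk, a, ha, hak⟩ := overspill hd
    (P := fun k => ∃ a, d < a ∧ ∀ i, i < k → (B a i ↔ P i))
    (by apply_rules [DefPred.ex, DefPred.all, DefPred.and, DefPred.imp, DefPred.iff, defPred_lt,
          DefPred.comp₂ hB, DefPred.comp₁ hP, DefFun.var, DefFun.const])
    (by
      intro n
      obtain ⟨a, ha, han⟩ := exists_gt_digitB_iff d {i : ℕ | P i} n
      refine ⟨a, ha, fun i hi => ?_⟩
      obtain ⟨m, hm, rfl⟩ := exists_eq_cast_of_lt_cast hi
      rw [hdig, han m hm, Set.mem_ofPred_eq])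
  refine ⟨a, not_isStd_of_lt hd ha, fun i => ?_⟩
  rw [← hdig, hak i (cast_lt_of_not_isStd hk i), Set.mem_ofPred_eq]

end Coding

namespace RecursiveIn

variable {O : ℕ → ℕ}

theorem of_partrec {f : ℕ →. ℕ} (hf : Nat.Partrec f) : RecursiveIn O f := by
  induction hf with
  | zero => exact .zero
  | succ => exact .succ
  | left => exact .left
  | right => exact .right
  | pair _ _ hf hg => exact .pair hf hg
  | comp _ _ hf hg => exact .comp hf hg
  | prec _ _ hf hg => exact .prec hf hg
  | rfind _ hf => exact .rfind hf

theorem of_primrec {f : ℕ → ℕ} (hf : Primrec f) : RecursiveIn O (f : ℕ →. ℕ) :=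
  of_partrec (Nat.Partrec.of_primrec (Primrec.nat_iff.1 hf))

theorem comp_total {f g : ℕ → ℕ} (hf : RecursiveIn O (f : ℕ →. ℕ))
    (hg : RecursiveIn O (g : ℕ →. ℕ)) : RecursiveIn O ((fun n => f (g n) : ℕ → ℕ) : ℕ →. ℕ) := by
  refine (congrArg (RecursiveIn O) (funext fun n => ?_)).mpr (RecursiveIn.comp hf hg)
  exact (Part.bind_some _ _).symm

theorem pair_total {f g : ℕ → ℕ} (hf : RecursiveIn O (f : ℕ →. ℕ))
    (hg : RecursiveIn O (g : ℕ →. ℕ)) :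
    RecursiveIn O ((fun n => Nat.pair (f n) (g n) : ℕ → ℕ) : ℕ →. ℕ) := by
  refine (congrArg (RecursiveIn O) (funext fun n => ?_)).mpr (RecursiveIn.pair hf hg)
  simp [Seq.seq]

theorem comp₂_total {F : ℕ → ℕ → ℕ} (hF : Primrec₂ F) {f g : ℕ → ℕ}
    (hf : RecursiveIn O (f : ℕ →. ℕ)) (hg : RecursiveIn O (g : ℕ →. ℕ)) :
    RecursiveIn O ((fun n => F (f n) (g n) : ℕ → ℕ) : ℕ →. ℕ) := by
  have hF' : Primrec fun p : ℕ => F p.unpair.1 p.unpair.2 :=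
    hF.comp (Primrec.fst.comp .unpair) (Primrec.snd.comp .unpair)
  simpa only [Nat.unpair_pair] using comp_total (of_primrec hF') (pair_total hf hg)

theorem prec_total {f g : ℕ → ℕ} (hf : RecursiveIn O (f : ℕ →. ℕ))
    (hg : RecursiveIn O (g : ℕ →. ℕ)) :
    RecursiveIn O ((fun n => n.unpair.2.rec (f n.unpair.1)
      fun y i => g (Nat.pair n.unpair.1 (Nat.pair y i)) : ℕ → ℕ) : ℕ →. ℕ) := by
  refine (congrArg (RecursiveIn O) (funext fun n => ?_)).mpr (RecursiveIn.prec hf hg)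
  simp only [Nat.unpaired, PFun.coe_val]
  induction n.unpair.2 with
  | zero => rfl
  | succ m ih => exact (Part.bind_some _ fun i => Part.some
      (g (Nat.pair n.unpair.1 (Nat.pair m i)))).symm.trans (congrArg
      (Part.bind · fun i => Part.some (g (Nat.pair n.unpair.1 (Nat.pair m i)))) ih)

end RecursiveIn

theorem two_mul_mem_turingJoin {X Y : Set ℕ} {n : ℕ} : 2 * n ∈ turingJoin X Y ↔ n ∈ X := by
  constructor
  · rintro (⟨m, hm, e⟩ | ⟨m, -, e⟩)
    · obtain rfl : n = m := by omega
      exact hm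
    · omega
  · exact fun hn => .inl ⟨n, hn, rfl⟩

theorem two_mul_add_one_mem_turingJoin {X Y : Set ℕ} {n : ℕ} :
    2 * n + 1 ∈ turingJoin X Y ↔ n ∈ Y := by
  constructor
  · rintro (⟨m, -, e⟩ | ⟨m, hm, e⟩)
    · omega
    · obtain rfl : n = m := by omega
      exact hm
  · exact fun hn => .inr ⟨n, hn, rfl⟩

namespace TuringIdeal

variable {S : Set (Set ℕ)} (hS : TuringIdeal S) {X Y : Set ℕ}

include hS

theorem preimage_mem (hX : X ∈ S) {g : ℕ → ℕ} (hg : Primrec g) : {n | g n ∈ X} ∈ S :=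
  hS.2 X hX _ (.comp_total (f := charFn X) .oracle (.of_primrec hg))

theorem setOf_primrecPred_mem (hX : X ∈ S) {p : ℕ → Prop} (hp : PrimrecPred p) :
    {n | p n} ∈ S := by
  classical
  exact hS.2 X hX _ (.of_primrec (.ite hp (.const 1) (.const 0)))

theorem compl_mem (hX : X ∈ S) : Xᶜ ∈ S := by
  refine hS.2 X hX _ ?_
  unfold TuringLE
  convert! RecursiveIn.comp₂_total (O := charFn X) (f := fun _ => 1) Primrec.nat_sub
    (.of_primrec (.const 1)) .oracle using 2
  funext n
  by_cases hn : n ∈ X <;> simp [charFn, hn]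

theorem inter_mem (hX : X ∈ S) (hY : Y ∈ S) : X ∩ Y ∈ S := by
  have htwo : Primrec fun n : ℕ => 2 * n := Primrec.nat_mul.comp (.const 2) .id
  refine hS.2 _ (hS.1 X hX Y hY) _ ?_
  unfold TuringLE
  convert! RecursiveIn.comp₂_total (O := charFn (turingJoin X Y)) Primrec.nat_mul
    (.comp_total .oracle (.of_primrec htwo))
    (.comp_total .oracle (.of_primrec (Primrec.succ.comp htwo))) using 2
  funext n
  by_cases hX : n ∈ X <;> by_cases hY : n ∈ Y <;>
    simp [charFn, two_mul_mem_turingJoin, two_mul_add_one_mem_turingJoin, hX, hY]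

theorem forall_lt_mem (hX : X ∈ S) : {n | ∀ m < n, Nat.pair n m ∈ X} ∈ S := by
  have hleft : Primrec fun n : ℕ => n.unpair.1 := Primrec.fst.comp .unpair
  have hright : Primrec fun n : ℕ => n.unpair.2 := Primrec.snd.comp .unpair
  have hstep : RecursiveIn (charFn X) ((fun n => n.unpair.2.unpair.2 *
      charFn X (Nat.pair n.unpair.1 n.unpair.2.unpair.1) : ℕ → ℕ) : ℕ →. ℕ) :=
    .comp₂_total Primrec.nat_mul (.of_primrec (hright.comp hright))
      (.comp_total .oracle (.of_primrec (Primrec₂.natPair.comp hleft (hleft.comp hright))))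
  have hprod (n k : ℕ) : (k.rec 1 fun m i => i * charFn X (Nat.pair n m) : ℕ) =
      charFn {k | ∀ m < k, Nat.pair n m ∈ X} k := by
    induction k with
    | zero => simp [charFn]
    | succ k ih =>
      change (k.rec 1 fun m i => i * charFn X (Nat.pair n m) : ℕ) * charFn X (Nat.pair n k) = _
      rw [ih]
      simp only [charFn, Set.mem_ofPred_eq, Nat.forall_lt_succ_right]
      grind
  refine hS.2 X hX _ ?_
  unfold TuringLE
  convert! RecursiveIn.comp_total (.prec_total (f := fun _ => 1) (.of_primrec (.const 1)) hstep)
    (.pair_total (.of_primrec .id) (.of_primrec .id)) using 2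
  funext n
  simp only [id, Nat.unpair_pair, hprod]
  rfl

theorem exists_encode_mem_iff_two_mul (hY : Y ∈ S) :
    ∃ A ∈ S, ∀ s : List Bool, Encodable.encode s ∈ A ↔
      ∀ (i : ℕ) (hi : 2 * i < s.length), s[2 * i] = true ↔ i ∈ Y := by
  let entry (p : ℕ) : Option Bool :=
    (Encodable.decode (α := List Bool) p.unpair.1).bind fun s => s[2 * p.unpair.2]?
  have hentry : Primrec entry := Primrec.option_bind
    (Primrec.decode.comp (Primrec.fst.comp .unpair))
    (Primrec.list_getElem?.comp .snd (Primrec.nat_mul.comp (.const 2)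
      (Primrec.snd.comp (Primrec.unpair.comp .fst))))
  have hE (b : Bool) : {p | entry p = some b} ∈ S :=
    hS.setOf_primrecPred_mem hY (Primrec.eq.comp hentry (.const (some b)))
  have hY' : {p : ℕ | p.unpair.2 ∈ Y} ∈ S := hS.preimage_mem hY (Primrec.snd.comp .unpair)
  refine ⟨_, hS.forall_lt_mem (hS.inter_mem
    (hS.compl_mem (hS.inter_mem (hE true) (hS.compl_mem hY')))
    (hS.compl_mem (hS.inter_mem (hE false) hY'))), fun s => ?_⟩
  have hentry_iff (i : ℕ) (hi : 2 * i < s.length) :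
      entry (Nat.pair (Encodable.encode s) i) = some s[2 * i] := by
    simp [entry, hi]
  constructor
  · intro hs i hi
    have := hs i (by have := Encodable.length_le_encode s; omega)
    cases hb : s[2 * i] <;> simp_all
  · intro hs i _
    by_cases hi : 2 * i < s.length
    · have := hs i hi
      cases hb : s[2 * i] <;> simp_all
    · simp [entry, hi]

end TuringIdeal

theorem pathThrough_iff {P T : Set ℕ} [DecidablePred (· ∈ P)] : PathThrough P T ↔
    ∀ k : ℕ, Encodable.encode (List.ofFn fun i : Fin k => decide ((i : ℕ) ∈ P)) ∈ T := by
  refine ⟨fun hP => hP (fun i => decide (i ∈ P)) (by simp), fun hP f hf k => ?_⟩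
  convert hP k using 5 with i
  simp [← hf]

theorem ScottSet.exists_pathThrough_two_mul_mem_iff {S : Set (Set ℕ)} (hS : ScottSet S)
    {T Y : Set ℕ} (hT : T ∈ S) (htree : IsBinTreeSet T) (hY : Y ∈ S)
    (hTY : ∀ k, ∃ s : List Bool, s.length = k ∧ Encodable.encode s ∈ T ∧
      ∀ (i : ℕ) (hi : 2 * i < s.length), s[2 * i] = true ↔ i ∈ Y) :
    ∃ P ∈ S, PathThrough P T ∧ ∀ i, 2 * i ∈ P ↔ i ∈ Y := by
  classical
  obtain ⟨A, hA, hAs⟩ := hS.2.1.exists_encode_mem_iff_two_mul hY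
  have htree' : IsBinTreeSet (T ∩ A) := by
    rintro s ⟨hsT, hsA⟩ t ht
    rw [hAs] at hsA
    refine ⟨htree s hsT t ht, (hAs t).2 fun i hi => ?_⟩
    rw [ht.getElem hi, hsA]
  have hinf : TreeInf (T ∩ A) := by
    choose s hlen hsT hsY using hTY
    exact Set.infinite_of_injective_forall_mem (f := s)
      (fun a b e => by rw [← hlen a, ← hlen b, e]) fun k => ⟨hsT k, (hAs _).2 (hsY k)⟩
  obtain ⟨P, hP, hpath⟩ := hS.2.2 _ (hS.2.1.inter_mem hT hA) htree' hinf
  rw [pathThrough_iff] at hpath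
  refine ⟨P, hP, pathThrough_iff.2 fun k => (hpath k).1, fun i => ?_⟩
  have := (hAs _).1 (hpath (2 * i + 1)).2 i (by simp)
  rwa [List.getElem_ofFn, decide_eq_true_iff] at this

/-- The number coding the binary sequence `s`: its binary digits are the entries of `s`, followed
by a leading `1` which marks the length. -/
def listNum (s : List Bool) : ℕ := s.foldr Nat.bit 1

theorem primrec_listNum : Primrec listNum := by
  have hbit : Primrec₂ Nat.bit := by
    refine (Primrec.nat_add.comp (Primrec.nat_mul.comp (.const 2) .snd)
      ((Primrec.dom_finite Bool.toNat).comp .fst)).of_eq fun p => ?_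
    rw [Nat.bit_val]
  exact Primrec.list_foldr .id (.const 1) (hbit.comp (Primrec.fst.comp .snd)
    (Primrec.snd.comp .snd)).to₂

theorem testBit_listNum (s : List Bool) (i : ℕ) :
    (listNum s).testBit i = (s ++ [true]).getD i false := by
  induction s generalizing i with
  | nil => cases i <;> simp [listNum, Nat.testBit_succ]
  | cons b s ih =>
    change (Nat.bit b (listNum s)).testBit i = _
    cases i with
    | zero => simp
    | succ i => simpa [Nat.testBit_bit_succ] using ih i

theorem testBit_listNum_of_lt {s : List Bool} {i : ℕ} (hi : i < s.length) :
    (listNum s).testBit i = s[i] := by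
  rw [testBit_listNum, List.getD_append _ _ _ _ hi, List.getD_eq_getElem _ _ hi]

theorem testBit_listNum_length (s : List Bool) : (listNum s).testBit s.length = true := by
  simp [testBit_listNum]

theorem le_length_of_testBit_listNum {s : List Bool} {i : ℕ}
    (hi : (listNum s).testBit i = true) : i ≤ s.length := by
  by_contra hlt
  rw [testBit_listNum, List.getD_eq_default _ _ (by simp; omega)] at hi
  exact absurd hi Bool.false_ne_true

instance : Countable arith.Symbols := by
  have hF : Countable (Σ n, arith.Functions n) := by
    refine Function.Surjective.countable (α := Fin 4) (f := ![⟨0, arithFunc.zero⟩,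
      ⟨0, arithFunc.one⟩, ⟨2, arithFunc.add⟩, ⟨2, arithFunc.mul⟩]) ?_
    rintro ⟨n, f⟩
    change arithFunc n at f
    cases f
    exacts [⟨0, rfl⟩, ⟨1, rfl⟩, ⟨2, rfl⟩, ⟨3, rfl⟩]
  have hR : Countable (Σ n, arith.Relations n) := by
    refine Function.Surjective.countable (α := Unit) (f := fun _ => ⟨2, arithRel.lt⟩) ?_
    rintro ⟨n, r⟩
    change arithRel n at r
    cases r
    exact ⟨(), rfl⟩
  exact inferInstanceAs (Countable ((Σ n, arith.Functions n) ⊕ Σ n, arith.Relations n))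

section Generic

open Filter

/-- The filter generated by the conditions `d < x` and `G x i ↔ i ∈ Y`, for standard `i`. When
it is proper, it is the partial type of an element beyond `d` at which `G` codes `Y`. -/
def traceFilter {M : Type*} [LT M] [NatCast M] (d : M) (G : M → M → Prop) (Y : Set ℕ) : Filter M :=
  ⨅ k : ℕ, 𝓟 {x | d < x ∧ ∀ i < k, G x (i : M) ↔ i ∈ Y}

variable {M : Type*} [arith.Structure M] [h : Fact (IsPAModel M)]
  {d : M} {G H : M → M → Prop} {Y : Set ℕ} {S : Set (Set ℕ)}

theorem traceFilter_neBot_iff :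
    (traceFilter d G Y).NeBot ↔ ∀ k : ℕ, ∃ x, d < x ∧ ∀ i < k, G x i ↔ i ∈ Y := by
  have hanti : Antitone fun k : ℕ => {x : M | d < x ∧ ∀ i < k, G x i ↔ i ∈ Y} :=
    fun k l hkl x hx => ⟨hx.1, fun i hi => hx.2 i (hi.trans_le hkl)⟩
  rw [traceFilter, (hasBasis_iInf_principal hanti.directed_ge).neBot_iff]
  exact ⟨fun hne k => hne trivial, fun hne k _ => hne k⟩

theorem le_traceFilter_iff {F : Filter M} : F ≤ traceFilter d G Y ↔
    (∀ᶠ x in F, d < x) ∧ ∀ i : ℕ, ∀ᶠ x in F, G x i ↔ i ∈ Y := by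
  simp only [traceFilter, le_iInf_iff, le_principal_iff]
  constructor
  · intro hF
    refine ⟨?_, fun i => ?_⟩
    · filter_upwards [hF 0] with x hx using hx.1
    · filter_upwards [hF (i + 1)] with x hx using hx.2 i i.lt_succ_self
  · rintro ⟨hd, hG⟩ k
    filter_upwards [hd, (eventually_all_finite (Set.finite_lt_nat k)).2 fun i _ => hG i]
      with x hdx hGx using ⟨hdx, hGx⟩

/-- The join of two binary relations, along the parity of the second argument. -/
def joinRel (G H : M → M → Prop) (x m : M) : Prop :=
  (∃ i, m = i + i ∧ G x i) ∨ ∃ i, m = i + i + 1 ∧ H x i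

theorem exists_eq_cast_of_add_self_le {j : M} {m : ℕ} (hj : j + j ≤ m) : ∃ n : ℕ, j = n := by
  have hlt : j < (m + 1 : ℕ) := by
    rw [Nat.cast_succ, Order.lt_add_one_iff]
    exact le_self_add.trans hj
  exact (exists_eq_cast_of_lt_cast hlt).imp fun _ => And.right

theorem joinRel_two_mul (x : M) (i : ℕ) : joinRel G H x (2 * i : ℕ) ↔ G x i := by
  constructor
  · rintro (⟨j, e, hj⟩ | ⟨j, e, hj⟩)
    · obtain ⟨n, rfl⟩ := exists_eq_cast_of_add_self_le e.ge
      have : 2 * i = n + n := by exact_mod_cast e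
      rwa [show i = n by omega]
    · obtain ⟨n, rfl⟩ := exists_eq_cast_of_add_self_le (le_self_add.trans e.ge)
      have : 2 * i = n + n + 1 := by exact_mod_cast e
      omega
  · exact fun hi => .inl ⟨i, by push_cast; ring, hi⟩

theorem joinRel_two_mul_add_one (x : M) (i : ℕ) :
    joinRel G H x (2 * i + 1 : ℕ) ↔ H x i := by
  constructor
  · rintro (⟨j, e, hj⟩ | ⟨j, e, hj⟩)
    · obtain ⟨n, rfl⟩ := exists_eq_cast_of_add_self_le e.ge
      have : 2 * i + 1 = n + n := by exact_mod_cast e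
      omega
    · obtain ⟨n, rfl⟩ := exists_eq_cast_of_add_self_le (le_self_add.trans e.ge)
      have : 2 * i + 1 = n + n + 1 := by exact_mod_cast e
      rwa [show i = n by omega]
  · exact fun hi => .inr ⟨i, by push_cast; ring, hi⟩

theorem defPred₂_joinRel (hG : DefPred₂ arith G) (hH : DefPred₂ arith H) :
    DefPred₂ arith (joinRel G H) := by
  unfold joinRel
  apply_rules [DefPred.or, DefPred.ex, DefPred.and, DefPred.eq, DefPred.comp₂ hG,
    DefPred.comp₂ hH, defFun_add, DefFun.var, DefFun.const]

theorem traceFilter_joinRel (P : Set ℕ) : traceFilter d (joinRel G H) P =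
    traceFilter d G {i | 2 * i ∈ P} ⊓ traceFilter d H {i | 2 * i + 1 ∈ P} := by
  refine eq_of_forall_le_iff fun F => ?_
  simp only [le_inf_iff, le_traceFilter_iff, Set.mem_ofPred_eq]
  constructor
  · rintro ⟨hd, hF⟩
    refine ⟨⟨hd, fun i => ?_⟩, hd, fun i => ?_⟩
    · simpa only [joinRel_two_mul] using hF (2 * i)
    · simpa only [joinRel_two_mul_add_one] using hF (2 * i + 1)
  · rintro ⟨⟨hd, hG⟩, -, hH⟩
    refine ⟨hd, fun m => ?_⟩
    obtain ⟨i, rfl | rfl⟩ := m.even_or_odd'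
    · simpa only [joinRel_two_mul] using hG i
    · simpa only [joinRel_two_mul_add_one] using hH i

theorem exists_tree_mem (hd : ¬ IsStd d) (hS : TuringIdeal S) (hMS : SSy M ⊆ S)
    (hG : DefPred₂ arith G) :
    ∃ T ∈ S, ∀ s : List Bool, Encodable.encode s ∈ T ↔
      ∃ x, d < x ∧ ∀ (i : ℕ) (hi : i < s.length), s[i] = true ↔ G x i := by
  obtain ⟨B, hB, hdig⟩ := exists_defPred_digit hd
  have hmem := hMS (setOf_cast_mem_SSy hd
    (P := fun e => ∃ x, d < x ∧ ∀ j, j < e → B e j → ∀ i, i < j → (B e i ↔ G x i))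
    (by apply_rules [DefPred.ex, DefPred.all, DefPred.and, DefPred.imp, DefPred.iff, defPred_lt,
      DefPred.comp₂ hB, DefPred.comp₂ hG, DefFun.var, DefFun.const]))
  have hdecode : Primrec fun n : ℕ => listNum ((Encodable.decode n).getD []) :=
    primrec_listNum.comp (Primrec.option_getD.comp .decode (.const []))
  refine ⟨_, hS.preimage_mem hmem hdecode, fun s => ?_⟩
  simp only [Set.mem_ofPred_eq, Encodable.encodek, Option.getD_some]
  refine exists_congr fun x => and_congr_right fun _ => ⟨fun hx i hi => ?_, ?_⟩
  · have htop := testBit_listNum_length s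
    have hlen : (s.length : M) < listNum s := by
      exact_mod_cast Nat.lt_two_pow_self.trans_le (Nat.ge_two_pow_of_testBit htop)
    have := hx s.length hlen ((hdig _ _).2 ((digitB_cast _ _).2 htop)) i (by exact_mod_cast hi)
    rw [← this, hdig, digitB_cast, testBit_listNum_of_lt hi]
  · intro hx j hj hBj i hij
    obtain ⟨j, -, rfl⟩ := exists_eq_cast_of_lt_cast hj
    obtain ⟨i, hi, rfl⟩ := exists_eq_cast_of_lt_cast hij
    rw [hdig, digitB_cast] at hBj
    have hi' : i < s.length := hi.trans_le (le_length_of_testBit_listNum hBj)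
    rw [hdig, digitB_cast, testBit_listNum_of_lt hi', hx i hi']

/-- A proper filter generated by the digits beyond `d` of a definable relation, as prescribed by
a member of `S`: the conditions of the construction of a generic ultrafilter. -/
def IsCondition (S : Set (Set ℕ)) (d : M) (F : Filter M) : Prop :=
  F.NeBot ∧ ∃ G : M → M → Prop, DefPred₂ arith G ∧ ∃ Y ∈ S, F = traceFilter d G Y

theorem IsCondition.exists_inf_traceFilter (hd : ¬ IsStd d) (hS : ScottSet S) (hMS : SSy M ⊆ S)
    {F : Filter M} (hF : IsCondition S d F) (hH : DefPred₂ arith H) :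
    ∃ Z ∈ S, IsCondition S d (F ⊓ traceFilter d H Z) := by
  classical
  obtain ⟨hne, G, hG, Y, hY, rfl⟩ := hF
  obtain ⟨T, hT, hTs⟩ := exists_tree_mem hd hS.2.1 hMS (defPred₂_joinRel hG hH)
  have htree : IsBinTreeSet T := fun s hs t ht => by
    obtain ⟨x, hdx, hx⟩ := (hTs s).1 hs
    exact (hTs t).2 ⟨x, hdx, fun i hi => by rw [ht.getElem hi, hx]⟩
  obtain ⟨P, hP, hpath, hPY⟩ := hS.exists_pathThrough_two_mul_mem_iff hT htree hY fun k => by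
    obtain ⟨x, hdx, hx⟩ := traceFilter_neBot_iff.1 hne k
    refine ⟨List.ofFn fun i : Fin k => decide (joinRel G H x (i : ℕ)), List.length_ofFn,
      (hTs _).2 ⟨x, hdx, fun i hi => by simp⟩, fun i hi => ?_⟩
    rw [List.length_ofFn] at hi
    rw [List.getElem_ofFn, decide_eq_true_iff, ← hx i (by omega)]
    exact joinRel_two_mul x i
  have hP' : traceFilter d (joinRel G H) P =
      traceFilter d G Y ⊓ traceFilter d H {i | 2 * i + 1 ∈ P} := by
    rw [traceFilter_joinRel, show {i | 2 * i ∈ P} = Y from Set.ext hPY]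
  have hneP : (traceFilter d (joinRel G H) P).NeBot := traceFilter_neBot_iff.2 fun k => by
    obtain ⟨x, hdx, hx⟩ := (hTs _).1 (pathThrough_iff.1 hpath k)
    refine ⟨x, hdx, fun i hi => ?_⟩
    rw [← hx i (by rwa [List.length_ofFn]), List.getElem_ofFn, decide_eq_true_iff]
  exact ⟨_, hS.2.1.preimage_mem hP (Primrec.succ.comp (Primrec.nat_mul.comp (.const 2) .id)),
    hP' ▸ hneP, _, defPred₂_joinRel hG hH, P, hP, hP'.symm⟩

theorem IsCondition.exists_ultrafilter_le (hd : ¬ IsStd d) (hS : ScottSet S) (hMS : SSy M ⊆ S)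
    {F : Filter M} (hF : IsCondition S d F) {R : ℕ → M → M → Prop}
    (hR : ∀ n, DefPred₂ arith (R n)) :
    ∃ u : Ultrafilter M, ↑u ≤ F ∧ ∀ n, ∃ Z ∈ S, ↑u ≤ traceFilter d (R n) Z := by
  have hstep (n : ℕ) (c : {F : Filter M // IsCondition S d F}) :
      ∃ c' : {F : Filter M // IsCondition S d F}, ∃ Z ∈ S,
        c'.1 = c.1 ⊓ traceFilter d (R n) Z := by
    obtain ⟨Z, hZ, hc⟩ := c.2.exists_inf_traceFilter hd hS hMS (hR n)
    exact ⟨⟨_, hc⟩, Z, hZ, rfl⟩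
  choose next Z hZ hnext using hstep
  let c : ℕ → {F : Filter M // IsCondition S d F} := fun n => n.rec ⟨F, hF⟩ next
  have hc (n : ℕ) : (c (n + 1)).1 = (c n).1 ⊓ traceFilter d (R n) (Z n (c n)) :=
    hnext n (c n)
  have hanti : Antitone fun n => (c n).1 :=
    antitone_nat_of_succ_le fun n => (hc n).trans_le inf_le_left
  have : (⨅ n, (c n).1).NeBot :=
    iInf_neBot_of_directed' hanti.directed_ge fun n => (c n).2.1
  have hu (n : ℕ) : ↑(Ultrafilter.of (⨅ n, (c n).1)) ≤ (c n).1 :=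
    (Ultrafilter.of_le _).trans (iInf_le _ n)
  exact ⟨_, hu 0, fun n => ⟨_, hZ n (c n), (hu (n + 1)).trans ((hc n).trans_le inf_le_right)⟩⟩

theorem exists_generic_ultrafilter [Countable M] (hd : ¬ IsStd d) (hS : ScottSet S)
    (hMS : SSy M ⊆ S) {X : Set ℕ} (hX : X ∈ S) :
    ∃ u : Ultrafilter M, (∀ᶠ x in (u : Filter M), d < x) ∧
      (∀ i, ∀ᶠ x in (u : Filter M), digitB x i ↔ i ∈ X) ∧
      ∀ f, DefFun₁ arith f → {i | ∀ᶠ x in (u : Filter M), digitB (f x) i} ∈ S := by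
  obtain ⟨B, hB, hdig⟩ := exists_defPred_digit hd
  obtain ⟨f, hf⟩ := (countable_setOf_defFun₁ (L := arith) (M := M)).exists_eq_range
    ⟨id, DefFun.var 0⟩
  have hfdef (n : ℕ) : DefFun₁ arith (f n) := hf.ge (Set.mem_range_self n)
  have hcond : IsCondition S d (traceFilter d B X) := by
    refine ⟨traceFilter_neBot_iff.2 fun k => ?_, B, hB, X, hX, rfl⟩
    simpa only [hdig] using exists_gt_digitB_iff d X k
  obtain ⟨u, huX, hu⟩ := hcond.exists_ultrafilter_le hd hS hMS
    (R := fun n x i => B (f n x) i) fun n => hB.comp₂ ((hfdef n).comp₁ (.var 0)) (.var 1)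
  simp only [le_traceFilter_iff, hdig] at huX hu
  refine ⟨u, huX.1, huX.2, fun g hg => ?_⟩
  obtain ⟨n, rfl⟩ : g ∈ Set.range f := hf ▸ hg
  obtain ⟨Z, hZ, -, huZ⟩ := hu n
  convert hZ
  ext i
  exact (eventually_congr (huZ i)).trans eventually_const

end Generic

section Formulas

variable {N : Type*} [arith.Structure N] {α : Type*}

/-- The symbol `+` of the language of arithmetic. -/
def addSymbol : arith.Functions 2 := arithFunc.add

/-- The symbol `·` of the language of arithmetic. -/
def mulSymbol : arith.Functions 2 := arithFunc.mul

/-- The symbol `<` of the language of arithmetic. -/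
def ltSymbol : arith.Relations 2 := arithRel.lt

/-- The closed term denoting the numeral `n`. -/
def numeralTerm (α : Type*) : ℕ → arith.Term α
  | 0 => Term.func (L := arith) arithFunc.zero ![]
  | n + 1 => addSymbol.apply₂ (numeralTerm α n) (Term.func (L := arith) arithFunc.one ![])

theorem realize_numeralTerm (v : α → N) (n : ℕ) : (numeralTerm α n).realize v = numeral N n := by
  induction n with
  | zero =>
    exact congrArg (Structure.funMap (L := arith) (M := N)
      (show arith.Functions 0 from arithFunc.zero)) (Subsingleton.elim _ ![])
  | succ n ih =>
    rw [numeralTerm, Term.realize_functions_apply₂, ih]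
    exact congrArg (addM (numeral N n)) (congrArg (Structure.funMap (L := arith) (M := N)
      (show arith.Functions 0 from arithFunc.one)) (Subsingleton.elim _ ![]))

/-- The formula expressing that the value of the variable is the numeral `n`. -/
def numeralFormula (n : ℕ) : arith.Formula Unit :=
  Term.equal (Term.var ()) (numeralTerm Unit n)

theorem realize_numeralFormula (v : Unit → N) (n : ℕ) :
    (numeralFormula n).Realize v ↔ v () = numeral N n := by
  rw [numeralFormula, Formula.realize_equal, realize_numeralTerm, Term.realize_var]

/-- The formula expressing that the `i`-th binary digit of the value of the variable is `1`. -/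
def digitFormula (i : ℕ) : arith.Formula Unit :=
  BoundedFormula.ex (BoundedFormula.ex
    (Term.bdEqual (Term.var (Sum.inl ()))
      (addSymbol.apply₂
        (mulSymbol.apply₂ (Term.var (Sum.inr 0)) (numeralTerm _ (2 ^ (i + 1))))
        (addSymbol.apply₂ (numeralTerm _ (2 ^ i)) (Term.var (Sum.inr 1)))) ⊓
      ltSymbol.boundedFormula₂ (Term.var (Sum.inr 1)) (numeralTerm _ (2 ^ i))))

theorem realize_digitFormula (v : Unit → N) (i : ℕ) :
    (digitFormula i).Realize v ↔ digitB (v ()) i := by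
  simp only [digitFormula, Formula.Realize, BoundedFormula.realize_ex, BoundedFormula.realize_inf,
    BoundedFormula.realize_bdEqual, BoundedFormula.realize_rel₂, Term.realize_functions_apply₂,
    realize_numeralTerm, Term.realize_var]
  rfl

end Formulas

section StandardSystem

open definableUltrapower

variable {M : Type*} [arith.Structure M] [Nonempty M] (u : Ultrafilter M)
  (hM : HasDefinableSkolemFunctions arith M) (f : {f : M → M // DefFun₁ arith f})

theorem isStd_mk_iff : IsStd (mk u hM f) ↔ ∃ n, ∀ᶠ m in (u : Filter M), f.1 m = numeral M n := by
  refine exists_congr fun n => ?_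
  simpa only [realize_numeralFormula] using realize_mk u hM (numeralFormula n) fun _ => f

theorem digitB_mk_iff (i : ℕ) :
    digitB (mk u hM f) i ↔ ∀ᶠ m in (u : Filter M), digitB (f.1 m) i := by
  simpa only [realize_digitFormula] using realize_mk u hM (digitFormula i) fun _ => f

theorem SSy_definableUltrapower_subset {S : Set (Set ℕ)}
    (hS : ∀ f, DefFun₁ arith f → {i | ∀ᶠ m in (u : Filter M), digitB (f m) i} ∈ S) :
    SSy (definableUltrapower u hM) ⊆ S := by
  rintro Y ⟨a, -, ha⟩
  obtain ⟨f, rfl⟩ := mk_surjective u hM a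
  convert hS f.1 f.2
  ext i
  rw [ha, digitB_mk_iff, Set.mem_ofPred_eq]

theorem mem_SSy_definableUltrapower {X : Set ℕ}
    (hu : ∀ n, ∀ᶠ m in (u : Filter M), m ≠ numeral M n)
    (hX : ∀ i, ∀ᶠ m in (u : Filter M), digitB m i ↔ i ∈ X) :
    X ∈ SSy (definableUltrapower u hM) := by
  refine ⟨mk u hM ⟨id, DefFun.var 0⟩, fun hstd => ?_, fun i => ?_⟩
  · obtain ⟨n, hn⟩ := (isStd_mk_iff u hM _).1 hstd
    obtain ⟨m, hm, hm'⟩ := (hn.and (hu n)).exists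
    exact hm' hm
  · rw [digitB_mk_iff]
    exact ((Filter.eventually_congr (hX i)).trans Filter.eventually_const).symm

end StandardSystem

end Arith

open Arith in
/-- **Ehrenfeucht.** If `S` is a Scott set and `M` a countable non-standard model of
`PA` with `SSy M ⊆ S`, then for every `X ∈ S` there is a countable elementary extension
`N` of `M` with `X ∈ SSy N ⊆ S`. -/
theorem statement_4 (S : Set (Set ℕ)) (hS : ScottSet S)
    (M : Type) [arith.Structure M] (hM : NonstandardModel M) (hMc : Countable M)
    (hsub : SSy M ⊆ S) (X : Set ℕ) (hX : X ∈ S) :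
    ∃ (N : Type) (_ : arith.Structure N) (_ : M ↪ₑ[arith] N),
      Countable N ∧ X ∈ SSy N ∧ SSy N ⊆ S := by
  have : Fact (IsPAModel M) := ⟨hM.1⟩
  obtain ⟨d, hd⟩ := hM.exists_not_isStd
  obtain ⟨u, hud, huX, huS⟩ := exists_generic_ultrafilter hd hS hsub hX
  have hnum (n : ℕ) : ∀ᶠ m in (u : Filter M), m ≠ numeral M n := by
    filter_upwards [hud] with m hm e using not_isStd_of_lt hd hm ⟨n, e⟩
  have hsk := hasDefinableSkolemFunctions (M := M)
  exact ⟨definableUltrapower u hsk, inferInstance, definableUltrapower.constEmbedding u hsk,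
    definableUltrapower.countable u hsk, mem_SSy_definableUltrapower u hsk hnum huX,
    SSy_definableUltrapower_subset u hsk huS⟩
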